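/- Let A be the straight line segment in ℝ³ from (-1,0,0) to (1,0,0). Then there exists a continuous, closed, surjective map f : ℝ³ → ℝ³ such that f⁻¹({0}) = A, f is injective on ℝ³ \ A, f maps the closed unit ball centered at (-2,0,0) onto the closed unit ball centered at (-1,0,0), and f maps the closed unit ball centered at (2,0,0) onto the closed unit ball centered at (1,0,0). Consequently the quotient space ℝ³/A obtained by collapsing A to a point is homeomorphic to ℝ³. -/

import Mathlib

open Metric Set

noncomputable section

/-- ℝ³ as Euclidean space. -/
abbrev R3 : Type := EuclideanSpace ℝ (Fin 3)

/-- The point (a, b, c) of ℝ³. -/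
def pt (a b c : ℝ) : R3 := (WithLp.equiv 2 (Fin 3 → ℝ)).symm ![a, b, c]

/-- A Cantor set in ℝ³: a nonempty compact perfect totally disconnected subset. -/
def IsCantorSubset (C : Set R3) : Prop :=
  C.Nonempty ∧ IsCompact C ∧ Perfect C ∧ IsTotallyDisconnected C


/-- The straight segment from (-1,0,0) to (1,0,0). -/
def segA : Set R3 := segment ℝ (pt (-1) 0 0) (pt 1 0 0)

/-- The equivalence relation on ℝ³ collapsing the set `A` to a single point. -/
def collapseSetoid (A : Set R3) : Setoid R3 where
  r x y := x = y ∨ (x ∈ A ∧ y ∈ A)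
  iseqv := by
    refine ⟨fun _ => Or.inl rfl, ?_, ?_⟩
    · rintro x y (rfl | ⟨hx, hy⟩)
      · exact Or.inl rfl
      · exact Or.inr ⟨hy, hx⟩
    · rintro x y z (rfl | ⟨hx, hy⟩) (rfl | ⟨hy', hz⟩)
      · exact Or.inl rfl
      · exact Or.inr ⟨hy', hz⟩
      · exact Or.inr ⟨hx, hy⟩
      · exact Or.inr ⟨hx, hz⟩

/-! Split `p = x e + v` with `e` a unit vector and `v ⊥ e`, and move `p` towards the hyperplane `eᗮ`
along `e`, by the clamping of `x / w` to `[-1, 1]`, where `w = 1 + ‖v‖² / 2`. On a line parallel to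
`e` with `v ≠ 0` we have `w > 1`, and the move is strictly increasing in `x`; on the axis `w = 1` it
collapses exactly `[-1, 1]`. Points are moved by elements of a fixed compact set, so the map is
proper. The ball of radius `1` about `2 e` lies in the region `w ≤ x`, where the move is the
translation by `-e`. -/

theorem isProperMap_of_sub_mem_isCompact {G : Type*} [AddGroup G] [TopologicalSpace G]
    [IsTopologicalAddGroup G] [T2Space G] {f : G → G} {K : Set G} (hf : Continuous f)
    (hK : IsCompact K) (hfK : ∀ p, p - f p ∈ K) : IsProperMap f := by
  refine isProperMap_iff_ultrafilter_of_t2.mpr ⟨hf, fun 𝒰 q hq ↦ ?_⟩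
  obtain ⟨k, -, hk⟩ := hK.ultrafilter_le_nhds' (𝒰.map fun p ↦ p - f p)
    (Ultrafilter.mem_map.mpr (Filter.univ_mem' hfK))
  have h_add : Filter.Tendsto (fun p ↦ p - f p + f p) 𝒰 (nhds (k + q)) := .add hk hq
  simp only [sub_add_cancel] at h_add
  exact ⟨k + q, h_add⟩

theorem nonempty_quotient_homeomorph_of_injOn_compl {X Y : Type*} [TopologicalSpace X]
    [TopologicalSpace Y] {f : X → Y} {A : Set X} {y : Y} {s : Setoid X}
    (hf : Topology.IsQuotientMap f) (hA : f ⁻¹' {y} = A) (hinj : InjOn f Aᶜ)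
    (hs : ∀ a b, s a b ↔ a = b ∨ a ∈ A ∧ b ∈ A) : Nonempty (Quotient s ≃ₜ Y) := by
  have mem_iff (a : X) : a ∈ A ↔ f a = y := by rw [← hA, mem_preimage, mem_singleton_iff]
  have s_eq_ker : s = Setoid.ker f := by
    ext a b
    rw [hs, Setoid.ker_def]
    constructor
    · rintro (rfl | ⟨ha, hb⟩)
      · rfl
      · rw [(mem_iff a).mp ha, (mem_iff b).mp hb]
    · intro hab
      by_cases ha : a ∈ A
      · exact .inr ⟨ha, (mem_iff b).mpr (hab ▸ (mem_iff a).mp ha)⟩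
      · have hb : b ∉ A := by rwa [mem_iff, ← hab, ← mem_iff]
        exact .inl (hinj ha hb hab)
  subst s_eq_ker
  exact ⟨Topology.IsQuotientMap.homeomorph (f := (⟨f, hf.continuous⟩ : C(X, Y))) hf⟩

theorem segment_neg_self_eq_image {𝕜 M : Type*} [Field 𝕜] [LinearOrder 𝕜] [IsStrictOrderedRing 𝕜]
    [AddCommGroup M] [Module 𝕜 M] (e : M) :
    segment 𝕜 (-e) e = (fun t : 𝕜 ↦ t • e) '' Icc (-1) 1 := by
  simpa [segment_eq_Icc] using
    (image_segment 𝕜 (LinearMap.toSpanSingleton 𝕜 M e).toAffineMap (-1) 1).symm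

/-- The one-dimensional collapse of scale `w`: it moves `x` towards `0` by the clamping of `x / w`
to `[-1, 1]`. For `w = 1` this is soft thresholding, which sends exactly `[-1, 1]` to `0`. -/
def shrink (w x : ℝ) : ℝ := x - max (-1) (min 1 (x / w))

theorem sub_shrink_mem_Icc (w x : ℝ) : x - shrink w x ∈ Icc (-1) 1 := by
  simp [shrink]

theorem shrink_neg (w x : ℝ) : shrink w (-x) = -shrink w x := by
  simp only [shrink, neg_div]
  grind

theorem shrink_of_le {w x : ℝ} (hw : 0 < w) (hx : w ≤ x) : shrink w x = x - 1 := by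
  simp [shrink, (one_le_div hw).mpr hx]

theorem strictMono_shrink {w : ℝ} (hw : 1 < w) : StrictMono (shrink w) := by
  intro x y hxy
  have h_div : y / w - x / w < y - x := by
    rw [← sub_div]
    exact div_lt_self (sub_pos.mpr hxy) hw
  have h_mono : x / w < y / w := by gcongr
  grind [shrink]

theorem shrink_one_eq_zero_iff {x : ℝ} : shrink 1 x = 0 ↔ x ∈ Icc (-1) 1 := by
  grind [shrink]

theorem injOn_shrink_one : InjOn (shrink 1) (Icc (-1) 1)ᶜ := by
  intro x hx y hy
  grind [shrink]

theorem surjective_shrink (w : ℝ) : Function.Surjective (shrink w) := by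
  intro y
  have h_cont : Continuous (shrink w) := by
    unfold shrink
    fun_prop
  have h_left := (sub_shrink_mem_Icc w (y - 1)).1
  have h_right := (sub_shrink_mem_Icc w (y + 1)).2
  exact mem_range_of_exists_le_of_exists_ge h_cont ⟨y - 1, by linarith⟩ ⟨y + 1, by linarith⟩

/-- The scale at which `collapseMap` shrinks the lines at distance `ρ` from the axis. The factor
`1 / 2` keeps the graph `x = collapseScale ρ` from crossing the unit ball about `2 e`. -/
def collapseScale (ρ : ℝ) : ℝ := 1 + ρ ^ 2 / 2

theorem collapseScale_pos (ρ : ℝ) : 0 < collapseScale ρ := by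
  unfold collapseScale
  positivity

theorem collapseScale_zero : collapseScale 0 = 1 := by
  simp [collapseScale]

theorem one_lt_collapseScale {ρ : ℝ} (hρ : ρ ≠ 0) : 1 < collapseScale ρ :=
  lt_add_of_pos_right _ (by positivity)

section InnerProductSpace

open scoped RealInnerProductSpace

variable {E : Type*} [NormedAddCommGroup E] [InnerProductSpace ℝ E] {e : E}

/-- The component of `p` orthogonal to `e`, for a unit vector `e`. -/
def orthPart (e p : E) : E := p - ⟪e, p⟫ • e

theorem inner_smul_add_orthPart (e p : E) : ⟪e, p⟫ • e + orthPart e p = p :=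
  add_sub_cancel _ _

theorem orthPart_neg (e p : E) : orthPart (-e) p = orthPart e p := by
  simp [orthPart]

theorem inner_orthPart (he : ‖e‖ = 1) (p : E) : ⟪e, orthPart e p⟫ = 0 := by
  simp [orthPart, inner_sub_right, real_inner_smul_right, he]

theorem inner_smul_add_orthPart_right (he : ‖e‖ = 1) (x : ℝ) (p : E) :
    ⟪e, x • e + orthPart e p⟫ = x := by
  simp [inner_add_right, real_inner_smul_right, inner_orthPart he, he]

theorem orthPart_smul_add_orthPart (he : ‖e‖ = 1) (x : ℝ) (p : E) :
    orthPart e (x • e + orthPart e p) = orthPart e p := by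
  rw [orthPart, inner_smul_add_orthPart_right he, add_sub_cancel_left]

theorem norm_sub_smul_sq (he : ‖e‖ = 1) (p : E) (c : ℝ) :
    ‖p - c • e‖ ^ 2 = (⟪e, p⟫ - c) ^ 2 + ‖orthPart e p‖ ^ 2 := by
  have h_orth : ⟪(⟪e, p⟫ - c) • e, orthPart e p⟫ = 0 := by
    rw [real_inner_smul_left, inner_orthPart he, mul_zero]
  have h_split : p - c • e = (⟪e, p⟫ - c) • e + orthPart e p := by
    rw [orthPart]
    module
  rw [h_split, norm_add_sq_real, h_orth, norm_smul, he, Real.norm_eq_abs, mul_one, sq_abs]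
  ring

/-- The map collapsing the segment from `-e` to `e` to the origin, for a unit vector `e`: it shrinks
each line parallel to `e` along itself, at a scale which is `1` only on the axis `ℝ e`. -/
def collapseMap (e p : E) : E :=
  shrink (collapseScale ‖orthPart e p‖) ⟪e, p⟫ • e + orthPart e p

theorem collapseMap_neg_axis (e : E) : collapseMap (-e) = collapseMap e := by
  ext p
  simp [collapseMap, orthPart_neg, shrink_neg]

theorem inner_collapseMap (he : ‖e‖ = 1) (p : E) :
    ⟪e, collapseMap e p⟫ = shrink (collapseScale ‖orthPart e p‖) ⟪e, p⟫ :=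
  inner_smul_add_orthPart_right he _ p

theorem orthPart_collapseMap (he : ‖e‖ = 1) (p : E) :
    orthPart e (collapseMap e p) = orthPart e p :=
  orthPart_smul_add_orthPart he _ p

theorem sub_collapseMap (e p : E) :
    p - collapseMap e p = (⟪e, p⟫ - shrink (collapseScale ‖orthPart e p‖) ⟪e, p⟫) • e := by
  rw [collapseMap, orthPart]
  module

theorem continuous_collapseMap (e : E) : Continuous (collapseMap e) := by
  have h_orth : Continuous (orthPart e) := by
    unfold orthPart
    fun_prop
  have h_scale : Continuous fun p ↦ collapseScale ‖orthPart e p‖ := by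
    unfold collapseScale
    fun_prop
  have h_div : Continuous fun p ↦ ⟪e, p⟫ / collapseScale ‖orthPart e p‖ :=
    .div (by fun_prop) h_scale fun p ↦ (collapseScale_pos _).ne'
  unfold collapseMap shrink
  fun_prop

theorem isProperMap_collapseMap (e : E) : IsProperMap (collapseMap e) := by
  have h_compact : IsCompact ((fun t : ℝ ↦ t • e) '' Icc (-1) 1) :=
    isCompact_Icc.image (by fun_prop)
  refine isProperMap_of_sub_mem_isCompact (continuous_collapseMap e) h_compact fun p ↦ ?_
  exact ⟨_, sub_shrink_mem_Icc _ _, (sub_collapseMap e p).symm⟩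

theorem surjective_collapseMap (he : ‖e‖ = 1) : Function.Surjective (collapseMap e) := by
  intro q
  obtain ⟨x, hx⟩ := surjective_shrink (collapseScale ‖orthPart e q‖) ⟪e, q⟫
  refine ⟨x • e + orthPart e q, ?_⟩
  rw [collapseMap, orthPart_smul_add_orthPart he, inner_smul_add_orthPart_right he, hx,
    inner_smul_add_orthPart]

theorem mem_segment_neg_self_iff (he : ‖e‖ = 1) {p : E} :
    p ∈ segment ℝ (-e) e ↔ orthPart e p = 0 ∧ ⟪e, p⟫ ∈ Icc (-1) 1 := by
  rw [segment_neg_self_eq_image]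
  constructor
  · rintro ⟨t, ht, rfl⟩
    simpa [orthPart, real_inner_smul_right, he] using ht
  · rintro ⟨h_orth, h_inner⟩
    exact ⟨_, h_inner, (sub_eq_zero.mp h_orth).symm⟩

theorem collapseMap_preimage_zero (he : ‖e‖ = 1) :
    collapseMap e ⁻¹' {0} = segment ℝ (-e) e := by
  ext p
  rw [mem_preimage, mem_singleton_iff, mem_segment_neg_self_iff he]
  constructor
  · intro hp
    have h_orth : orthPart e p = 0 := by
      rw [← orthPart_collapseMap he, hp]
      simp [orthPart]
    have h_shrink := inner_collapseMap he p
    rw [hp, inner_zero_right, h_orth, norm_zero, collapseScale_zero] at h_shrink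
    exact ⟨h_orth, shrink_one_eq_zero_iff.mp h_shrink.symm⟩
  · rintro ⟨h_orth, h_inner⟩
    rw [collapseMap, h_orth, norm_zero, collapseScale_zero, shrink_one_eq_zero_iff.mpr h_inner,
      zero_smul, add_zero]

theorem injOn_collapseMap (he : ‖e‖ = 1) :
    InjOn (collapseMap e) (segment ℝ (-e) e)ᶜ := by
  intro p hp q hq hpq
  rw [mem_compl_iff, mem_segment_neg_self_iff he] at hp hq
  have h_orth : orthPart e p = orthPart e q := by
    rw [← orthPart_collapseMap he p, hpq, orthPart_collapseMap he]
  have h_shrink : shrink (collapseScale ‖orthPart e q‖) ⟪e, p⟫ =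
      shrink (collapseScale ‖orthPart e q‖) ⟪e, q⟫ := by
    rw [← inner_collapseMap he q, ← hpq, inner_collapseMap he, h_orth]
  suffices h_inner : ⟪e, p⟫ = ⟪e, q⟫ by
    rw [← inner_smul_add_orthPart e p, h_inner, h_orth, inner_smul_add_orthPart]
  by_cases hq_axis : orthPart e q = 0
  · rw [hq_axis, norm_zero, collapseScale_zero] at h_shrink
    exact injOn_shrink_one (hp ⟨h_orth.trans hq_axis, ·⟩) (hq ⟨hq_axis, ·⟩) h_shrink
  · have h_scale := one_lt_collapseScale (norm_ne_zero_iff.mpr hq_axis)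
    exact (strictMono_shrink h_scale).injective h_shrink

theorem collapseMap_of_collapseScale_le {p : E} (hp : collapseScale ‖orthPart e p‖ ≤ ⟪e, p⟫) :
    collapseMap e p = p - e := by
  rw [← sub_sub_self p (collapseMap e p), sub_collapseMap, shrink_of_le (collapseScale_pos _) hp,
    sub_sub_cancel, one_smul]

theorem collapseScale_le_inner_of_mem_closedBall (he : ‖e‖ = 1) {c r : ℝ} (hr : r ^ 2 + 1 ≤ 2 * c)
    {p : E} (hp : p ∈ closedBall ((c + 1) • e) r) :
    collapseScale ‖orthPart e p‖ ≤ ⟪e, p⟫ := by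
  have h_norm : ‖p - (c + 1) • e‖ ^ 2 ≤ r ^ 2 := by
    gcongr
    exact mem_closedBall_iff_norm.mp hp
  rw [norm_sub_smul_sq he] at h_norm
  rw [collapseScale]
  linarith [sq_nonneg (⟪e, p⟫ - c)]

theorem collapseMap_image_closedBall (he : ‖e‖ = 1) {c r : ℝ} (hr : r ^ 2 + 1 ≤ 2 * c) :
    collapseMap e '' closedBall ((c + 1) • e) r = closedBall (c • e) r := by
  have h_translate : EqOn (collapseMap e) (IsometryEquiv.subRight e) (closedBall ((c + 1) • e) r) :=
    fun p hp ↦ collapseMap_of_collapseScale_le (collapseScale_le_inner_of_mem_closedBall he hr hp)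
  rw [h_translate.image_eq, IsometryEquiv.image_closedBall, IsometryEquiv.subRight_apply, add_smul,
    one_smul, add_sub_cancel_right]

theorem stmt_4_general (he : ‖e‖ = 1) {s : Setoid E}
    (hs : ∀ p q, s p q ↔ p = q ∨ p ∈ segment ℝ (-e) e ∧ q ∈ segment ℝ (-e) e) :
    ∃ f : E → E,
      Continuous f ∧ IsClosedMap f ∧ Function.Surjective f ∧
      f ⁻¹' {0} = segment ℝ (-e) e ∧
      InjOn f (segment ℝ (-e) e)ᶜ ∧
      f '' closedBall ((2 : ℝ) • -e) 1 = closedBall (-e) 1 ∧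
      f '' closedBall ((2 : ℝ) • e) 1 = closedBall e 1 ∧
      Nonempty (Quotient s ≃ₜ E) := by
  have h_ball {u : E} (hu : ‖u‖ = 1) :
      collapseMap u '' closedBall ((2 : ℝ) • u) 1 = closedBall u 1 := by
    simpa [one_add_one_eq_two] using
      collapseMap_image_closedBall hu (c := 1) (r := 1) (by norm_num)
  have h_cont := continuous_collapseMap e
  have h_closed := (isProperMap_collapseMap e).isClosedMap
  have h_surj := surjective_collapseMap he
  have h_preimage := collapseMap_preimage_zero he
  have h_inj := injOn_collapseMap he
  have h_left := collapseMap_neg_axis e ▸ h_ball ((norm_neg e).trans he)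
  exact ⟨collapseMap e, h_cont, h_closed, h_surj, h_preimage, h_inj, h_left, h_ball he,
    nonempty_quotient_homeomorph_of_injOn_compl (h_closed.isQuotientMap h_cont h_surj) h_preimage
      h_inj hs⟩

end InnerProductSpace

theorem smul_pt (t a b c : ℝ) : t • pt a b c = pt (t * a) (t * b) (t * c) := by
  ext i
  fin_cases i <;> rfl

theorem neg_pt (a b c : ℝ) : -pt a b c = pt (-a) (-b) (-c) := by
  ext i
  fin_cases i <;> rfl

theorem pt_zero : pt 0 0 0 = 0 := by
  ext i
  fin_cases i <;> rfl

theorem norm_pt_one_zero_zero : ‖pt 1 0 0‖ = 1 := by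
  simp [pt, EuclideanSpace.norm_eq, Fin.sum_univ_three]

theorem collapseSetoid_segA_iff (p q : R3) : collapseSetoid segA p q ↔
    p = q ∨ p ∈ segment ℝ (-pt 1 0 0) (pt 1 0 0) ∧ q ∈ segment ℝ (-pt 1 0 0) (pt 1 0 0) := by
  rw [neg_pt, neg_zero]
  rfl

/-- There is a continuous closed surjection of ℝ³ collapsing exactly the segment `A` to the
origin, injective off `A`, carrying the unit ball about (-2,0,0) onto the unit ball about
(-1,0,0) and the unit ball about (2,0,0) onto the unit ball about (1,0,0); consequently the
quotient ℝ³/A is homeomorphic to ℝ³. -/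
theorem stmt_4 :
    ∃ f : R3 → R3,
      Continuous f ∧ IsClosedMap f ∧ Function.Surjective f ∧
      f ⁻¹' {pt 0 0 0} = segA ∧
      Set.InjOn f segAᶜ ∧
      f '' closedBall (pt (-2) 0 0) 1 = closedBall (pt (-1) 0 0) 1 ∧
      f '' closedBall (pt 2 0 0) 1 = closedBall (pt 1 0 0) 1 ∧
      Nonempty (Quotient (collapseSetoid segA) ≃ₜ R3) := by
  simpa [segA, neg_pt, smul_pt, pt_zero] using
    stmt_4_general norm_pt_one_zero_zero collapseSetoid_segA_iff
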